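/- Let 𝒜 be an associative unital ℂ-algebra, let W be a 2m-dimensional ℂ-vector space with basis f_1, …, f_{2m}, and let ⋀W ⊗ 𝒜 be the tensor product algebra of the exterior algebra of W with 𝒜, with product (ω⊗X)(θ⊗Y) = (ω∧θ)⊗(XY). For a 2m×2m alternating matrix A = (A_{i,j}) over 𝒜, set Ξ_A := Σ_{i,j=1}^{2m} f_i f_j ⊗ A_{i,j}. Then Ξ_A^m = 2^m m! (f_1 ∧ f_2 ∧ ⋯ ∧ f_{2m}) ⊗ Pf(A). -/

import Mathlib

open TensorProduct

noncomputable section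

/-- Pfaffian of a `2m × 2m` matrix with (possibly noncommuting) entries in a `ℂ`-algebra. -/
def Pf {A : Type*} [Ring A] [Algebra ℂ A] {m : ℕ} (B : Matrix (Fin (2 * m)) (Fin (2 * m)) A) :
    A :=
  (((2 : ℂ) ^ m * m.factorial)⁻¹) • ∑ σ : Equiv.Perm (Fin (2 * m)),
    (Equiv.Perm.sign σ : ℤ) •
      (List.ofFn (fun i : Fin m =>
        B (σ ⟨2 * (i : ℕ), by have := i.isLt; omega⟩)
          (σ ⟨2 * (i : ℕ) + 1, by have := i.isLt; omega⟩))).prod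

/-- `2m`-dimensional vector space with basis `f_1, …, f_{2m}`. -/
abbrev W (m : ℕ) := Fin (2 * m) → ℂ

/-- The basis vectors `f_i` in the exterior algebra `⋀W`. -/
def f (m : ℕ) (i : Fin (2 * m)) : ExteriorAlgebra ℂ (W m) :=
  ExteriorAlgebra.ι ℂ (Pi.single i 1)

/-- The 2-form `Ξ_A = Σ_{i,j} f_i f_j ⊗ A_{i,j}` associated to `A`. -/
def Xi {A : Type*} [Ring A] [Algebra ℂ A] (m : ℕ)
    (B : Matrix (Fin (2 * m)) (Fin (2 * m)) A) : ExteriorAlgebra ℂ (W m) ⊗[ℂ] A :=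
  ∑ i : Fin (2 * m), ∑ j : Fin (2 * m), (f m i * f m j) ⊗ₜ[ℂ] B i j

theorem Xi_pow_aux {R A ι : Type*} [Ring R] [Algebra ℂ R] [Ring A] [Algebra ℂ A] [Fintype ι]
    (F : ι → R) (B : ι → ι → A) (n : ℕ) :
    (∑ i, ∑ j, (F i * F j) ⊗ₜ[ℂ] B i j) ^ n =
      ∑ s : Fin (2 * n) → ι, (List.ofFn (fun k => F (s k))).prod ⊗ₜ[ℂ]
        (List.ofFn (fun i : Fin n => B (s ⟨2 * (i : ℕ), by have := i.isLt; omega⟩)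
          (s ⟨2 * (i : ℕ) + 1, by have := i.isLt; omega⟩))).prod := by
  induction n with
  | zero =>
    rw [pow_zero, Fintype.sum_eq_single (fun k : Fin (2 * 0) => k.elim0)]
    · simp [Algebra.TensorProduct.one_def]
    · intro x hx
      exact absurd (funext fun k => k.elim0) hx
  | succ n ih =>
    rw [pow_succ', ih]
    change _ = ∑ s : Fin (2 * n + 1 + 1) → ι, _
    rw [← (Fin.consEquiv (fun _ : Fin (2 * n + 1 + 1) => ι)).sum_comp, Fintype.sum_prod_type,
      Finset.sum_mul]
    refine Finset.sum_congr rfl fun i _ => ?_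
    rw [← (Fin.consEquiv (fun _ : Fin (2 * n + 1) => ι)).sum_comp, Fintype.sum_prod_type,
      Finset.sum_mul]
    refine Finset.sum_congr rfl fun j _ => ?_
    rw [Finset.mul_sum]
    refine Finset.sum_congr rfl fun s _ => ?_
    rw [Algebra.TensorProduct.tmul_mul_tmul]
    congr 1
    · change _ = (List.ofFn (n := 2 * n + 1 + 1) _).prod
      rw [List.ofFn_succ, List.ofFn_succ, List.prod_cons, List.prod_cons, ← mul_assoc]
      rfl
    · rw [List.ofFn_succ, List.prod_cons]
      rfl

/-- `Ξ_A^m = 2^m m! (f_1 ∧ ⋯ ∧ f_{2m}) ⊗ Pf(A)` for an alternating matrix `A`. -/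
theorem Xi_pow (m : ℕ) {A : Type*} [Ring A] [Algebra ℂ A]
    (B : Matrix (Fin (2 * m)) (Fin (2 * m)) A)
    (halt : ∀ i j, B j i = -B i j) (hdiag : ∀ i, B i i = 0) :
    Xi m B ^ m =
      ((2 : ℂ) ^ m * (m.factorial : ℂ)) •
        ((List.ofFn (fun i : Fin (2 * m) => f m i)).prod ⊗ₜ[ℂ] Pf B) := by
  unfold Xi
  refine (Xi_pow_aux (f m) (fun i j => B i j) m).trans ?_
  have hc : ((2 : ℂ) ^ m * (m.factorial : ℂ)) ≠ 0 :=
    mul_ne_zero (pow_ne_zero _ two_ne_zero) (Nat.cast_ne_zero.2 m.factorial_ne_zero)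
  unfold Pf
  rw [TensorProduct.tmul_smul, smul_smul, mul_inv_cancel₀ hc, one_smul, TensorProduct.tmul_sum]
  have key : ∀ s : Fin (2 * m) → Fin (2 * m), (List.ofFn (fun k => f m (s k))).prod =
      ExteriorAlgebra.ιMulti ℂ (2 * m) (fun k => (Pi.single (s k) 1 : W m)) := by
    intro s
    rw [ExteriorAlgebra.ιMulti_apply]
    rfl
  symm
  refine Finset.sum_of_injOn (fun σ : Equiv.Perm (Fin (2 * m)) => (σ : Fin (2 * m) → Fin (2 * m)))
    (fun a _ b _ h => DFunLike.coe_injective h) (fun _ _ => Finset.mem_coe.2 (Finset.mem_univ _)) ?_ ?_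
  · intro s _ hs
    have hinj : ¬ Function.Injective s := by
      intro h
      exact hs ⟨Equiv.ofBijective s (Finite.injective_iff_bijective.1 h), by simp, rfl⟩
    rw [key, AlternatingMap.map_eq_zero_of_not_injective, TensorProduct.zero_tmul]
    intro h
    exact hinj fun a b hab => h (by simp only [hab])
  · intro σ _
    have h2 := (ExteriorAlgebra.ιMulti ℂ (2 * m)).map_perm
      (fun k => (Pi.single k 1 : W m)) σ
    have h3 := key (fun k => k)
    have h4 := key σ
    beta_reduce
    rw [h4, h3]
    change _ = (ExteriorAlgebra.ιMulti ℂ (2 * m)) ((fun k => (Pi.single k 1 : W m)) ∘ σ) ⊗ₜ[ℂ] _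
    rw [h2]
    rcases Int.units_eq_one_or (Equiv.Perm.sign σ) with h | h <;> rw [h] <;>
      simp [TensorProduct.neg_tmul, TensorProduct.tmul_neg]

end
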